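/- arXiv:2412.19203 — 3 statements merged into one kernel-verified Lean document; each statement's English description precedes it below -/
import Mathlib

section
/- For every integer s ≥ 3, the graph F₁(s) satisfies λ₂(F₁(s)) = 1; that is, exactly one eigenvalue of its adjacency matrix is strictly greater than 1, and at least two of its eigenvalues (counted with multiplicity) are ≥ 1. -/
/-!
Write `A` for the adjacency matrix of `F₁(s)` and `U = ∑ u_i`. Completing squares along the pendant
edges and at `a₁`, `a₂` gives
`x ⬝ x - x ⬝ A x = ∑_{i ≥ 3} (u_i - p_i)² + (a₁ - u₁ - v₁)² + (a₂ - u₂ - v₁)²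
  + (v₁ + v₂) (v₂ - v₁ - 2 U)`
(`F1_form`). This form is nonnegative on the hyperplane `v₁ + v₂ = 0`, so at most one eigenvalue
exceeds `1` (`eq_of_eigenvalues_gt`). It is negative at the indicator vector of `{v₁, a₁, a₂}`, so
some eigenvalue exceeds `1` (`exists_eigenvalue_gt`). Finally `1` is itself an eigenvalue, with
eigenvector taking the value `1` on `a₁, u₁`, `-1` on `a₂, u₂` and `0` elsewhere
(`F1_mulVec_vec`).
-/


/-- The adjacency matrix of a simple graph over `ℝ` is Hermitian. -/
lemma adjMatrix_isHermitian {V : Type*} [Fintype V] (G : SimpleGraph V)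
    [DecidableRel G.Adj] : ((G.adjMatrix ℝ)).IsHermitian := by
  rw [Matrix.IsHermitian, Matrix.conjTranspose_eq_transpose_of_trivial]
  exact G.isSymm_adjMatrix

/-- The number of eigenvalues (counted with multiplicity) of the real adjacency matrix of `G`
satisfying the predicate `p`. -/
noncomputable def eigCount {V : Type*} [Fintype V] [DecidableEq V]
    (G : SimpleGraph V) (p : ℝ → Prop) : ℕ := by
  classical
  exact (Finset.univ.filter fun i =>
    p ((adjMatrix_isHermitian G).eigenvalues i)).card

/-- Vertex type of the graph `F₁(s)`. -/
inductive F1Vert (s : ℕ) : Type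
  | v1 : F1Vert s
  | v2 : F1Vert s
  | a1 : F1Vert s
  | a2 : F1Vert s
  | u : Fin s → F1Vert s
  | p : {i : Fin s // 2 ≤ (i : ℕ)} → F1Vert s
  deriving DecidableEq, Fintype

/-- Base relation generating the edges of `F₁(s)` (indices are 0-based: `u 0 = u₁`, …;
pendant vertices `p i` exist for `i ≥ 2`, i.e. at each of `u₃, …, u_s`). -/
def F1Rel (s : ℕ) : F1Vert s → F1Vert s → Prop
  | .v2, .u _ => True
  | .v1, .u i => 2 ≤ (i : ℕ)
  | .v1, .a1 => True
  | .a1, .u i => (i : ℕ) = 0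
  | .v1, .a2 => True
  | .a2, .u i => (i : ℕ) = 1
  | .u i, .p j => i = j.1
  | _, _ => False

/-- The graph `F₁(s)`: obtained from `K_{2,s}` with parts `{v₁, v₂}` and `{u₁, …, u_s}` by
subdividing the edges `v₁u₁` and `v₁u₂` (creating `a₁`, `a₂`) and attaching a pendant edge
(to `p_i`) at each of `u₃, …, u_s`. -/
def F1 (s : ℕ) : SimpleGraph (F1Vert s) := SimpleGraph.fromRel (F1Rel s)

open Matrix

section General

variable {n : Type*} [Fintype n] [DecidableEq n] {A : Matrix n n ℝ}

lemma eigenvectorBasis_dotProduct (hA : A.IsHermitian) (i j : n) :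
    (⇑(hA.eigenvectorBasis i) : n → ℝ) ⬝ᵥ ⇑(hA.eigenvectorBasis j) = if i = j then 1 else 0 := by
  have h := orthonormal_iff_ite.mp hA.eigenvectorBasis.orthonormal i j
  rw [← h, EuclideanSpace.inner_eq_star_dotProduct, dotProduct_comm]
  simp

/-- If the form `x ⬝ A x` is at most `t * (x ⬝ x)` on a hyperplane, at most one eigenvalue,
counted with multiplicity, exceeds `t`. -/
lemma eq_of_eigenvalues_gt (hA : A.IsHermitian) (w : n → ℝ) (t : ℝ)
    (h : ∀ x, w ⬝ᵥ x = 0 → x ⬝ᵥ A *ᵥ x ≤ t * (x ⬝ᵥ x)) {i j : n}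
    (hi : t < hA.eigenvalues i) (hj : t < hA.eigenvalues j) : i = j := by
  by_contra hij
  set b : n → n → ℝ := fun k => ⇑(hA.eigenvectorBasis k) with hb
  have hd (k l : n) : b k ⬝ᵥ b l = if k = l then 1 else 0 := eigenvectorBasis_dotProduct hA k l
  have hm (k : n) : A *ᵥ b k = hA.eigenvalues k • b k := hA.mulVec_eigenvectorBasis k
  -- A nontrivial combination `α b_i + β b_j` lies in the hyperplane.
  obtain ⟨α, β, hne, h0⟩ : ∃ α β : ℝ, 0 < α ^ 2 + β ^ 2 ∧ w ⬝ᵥ (α • b i + β • b j) = 0 := by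
    simp only [dotProduct_add, dotProduct_smul, smul_eq_mul]
    by_cases hc : w ⬝ᵥ b i = 0
    · exact ⟨1, 0, by norm_num, by simp [hc]⟩
    · exact ⟨w ⬝ᵥ b j, -(w ⬝ᵥ b i), add_pos_of_nonneg_of_pos (sq_nonneg _)
        (sq_pos_of_ne_zero (neg_ne_zero.2 hc)), by ring⟩
  have h1 := h _ h0
  simp only [mulVec_add, mulVec_smul, hm, dotProduct_add, add_dotProduct, smul_dotProduct,
    dotProduct_smul, hd, smul_eq_mul, if_pos, if_neg hij, if_neg (Ne.symm hij)] at h1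
  rcases eq_or_ne α 0 with rfl | hα
  · nlinarith
  · nlinarith [mul_pos (sub_pos.2 hi) (by positivity : 0 < α ^ 2),
      mul_nonneg (sub_pos.2 hj).le (sq_nonneg β)]

/-- A vector with Rayleigh quotient above `t` forces an eigenvalue above `t`. -/
lemma exists_eigenvalue_gt (hA : A.IsHermitian) (x : n → ℝ) (t : ℝ)
    (h : t * (x ⬝ᵥ x) < x ⬝ᵥ A *ᵥ x) : ∃ i, t < hA.eigenvalues i := by
  by_contra! hle
  set b : n → n → ℝ := fun k => ⇑(hA.eigenvectorBasis k) with hb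
  have hm (k : n) : A *ᵥ b k = hA.eigenvalues k • b k := hA.mulVec_eigenvectorBasis k
  have parseval (y z : n → ℝ) : y ⬝ᵥ z = ∑ i, (b i ⬝ᵥ y) * (b i ⬝ᵥ z) := by
    have := hA.eigenvectorBasis.sum_inner_mul_inner (WithLp.toLp 2 y) (WithLp.toLp 2 z)
    simp only [EuclideanSpace.inner_eq_star_dotProduct, star_trivial] at this
    rw [dotProduct_comm, ← this]
    exact Finset.sum_congr rfl fun i _ => by rw [dotProduct_comm z]
  have hs (k : n) : b k ⬝ᵥ A *ᵥ x = hA.eigenvalues k * (b k ⬝ᵥ x) := by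
    have hT : Aᵀ = A := by simpa [IsHermitian] using hA
    rw [dotProduct_mulVec, ← mulVec_transpose, hT, hm, smul_dotProduct, smul_eq_mul]
  rw [parseval x (A *ᵥ x), parseval x x, Finset.mul_sum] at h
  refine absurd h (not_lt.2 (Finset.sum_le_sum fun k _ => ?_))
  rw [hs]
  nlinarith [mul_nonneg (sub_nonneg.2 (hle k)) (mul_self_nonneg (b k ⬝ᵥ x))]

lemma exists_eigenvalue_eq (hA : A.IsHermitian) (x : n → ℝ) (hx : x ≠ 0) (t : ℝ)
    (h : A *ᵥ x = t • x) : ∃ i, hA.eigenvalues i = t := by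
  have hmem : t ∈ spectrum ℝ A := by
    rw [← spectrum_toLin']
    exact (Module.End.hasEigenvalue_of_hasEigenvector (x := x)
      ⟨by simpa [Module.End.mem_eigenspace_iff] using h, hx⟩).mem_spectrum
  rw [hA.spectrum_real_eq_range_eigenvalues] at hmem
  exact hmem

end General

section Graph

variable {s : ℕ}

/-- The vertices `u₁`, `u₂` are separated from the `u_i` with `i ≥ 3`, which are grouped with their
pendant neighbours. -/
lemma F1_sum (hs : 3 ≤ s) (f : F1Vert s → ℝ) :
    ∑ v, f v = f .v1 + f .v2 + f .a1 + f .a2 + f (.u ⟨0, by omega⟩) + f (.u ⟨1, by omega⟩)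
      + ∑ j : {i : Fin s // 2 ≤ (i : ℕ)}, f (.u j.1)
      + ∑ j : {i : Fin s // 2 ≤ (i : ℕ)}, f (.p j) := by
  let e : Option (Option (Option (Option (Fin s ⊕ {i : Fin s // 2 ≤ (i : ℕ)})))) ≃ F1Vert s :=
    { toFun := fun
        | none => .v1
        | some none => .v2
        | some (some none) => .a1
        | some (some (some none)) => .a2
        | some (some (some (some (.inl i)))) => .u i
        | some (some (some (some (.inr j)))) => .p j
      invFun := fun
        | .v1 => none
        | .v2 => some none
        | .a1 => some (some none)
        | .a2 => some (some (some none))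
        | .u i => some (some (some (some (.inl i))))
        | .p j => some (some (some (some (.inr j))))
      left_inv := by rintro (_ | _ | _ | _ | _ | _) <;> rfl
      right_inv := by rintro (_ | _ | _ | _ | _ | _) <;> rfl }
  have hfin (g : Fin s → ℝ) : ∑ i, g i = g ⟨0, by omega⟩ + g ⟨1, by omega⟩
      + ∑ j : {i : Fin s // 2 ≤ (i : ℕ)}, g j.1 := by
    rw [← Finset.sum_subtype (Finset.univ.filter fun i : Fin s => 2 ≤ (i : ℕ)) (by simp) g,
      ← Finset.sum_filter_not_add_sum_filter Finset.univ (fun i : Fin s => 2 ≤ (i : ℕ)) g]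
    congr 1
    have : (Finset.univ.filter fun i : Fin s => ¬ 2 ≤ (i : ℕ))
        = {⟨0, by omega⟩, ⟨1, by omega⟩} := by
      ext i
      simp [Fin.ext_iff]
      omega
    rw [this, Finset.sum_pair (by simp)]
  rw [← e.sum_comp, Fintype.sum_option, Fintype.sum_option, Fintype.sum_option,
    Fintype.sum_option, Fintype.sum_sum_type, hfin]
  simp only [e, Equiv.coe_fn_mk]
  ring

variable [DecidableRel (F1 s).Adj]

lemma F1_mulVec (hs : 3 ≤ s) (x : F1Vert s → ℝ) :
    ((F1 s).adjMatrix ℝ *ᵥ x) .v1 = x .a1 + x .a2 + ∑ j : {i : Fin s // 2 ≤ (i : ℕ)}, x (.u j.1) ∧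
    ((F1 s).adjMatrix ℝ *ᵥ x) .v2 = x (.u ⟨0, by omega⟩) + x (.u ⟨1, by omega⟩)
      + ∑ j : {i : Fin s // 2 ≤ (i : ℕ)}, x (.u j.1) ∧
    ((F1 s).adjMatrix ℝ *ᵥ x) .a1 = x .v1 + x (.u ⟨0, by omega⟩) ∧
    ((F1 s).adjMatrix ℝ *ᵥ x) .a2 = x .v1 + x (.u ⟨1, by omega⟩) ∧
    ((F1 s).adjMatrix ℝ *ᵥ x) (.u ⟨0, by omega⟩) = x .v2 + x .a1 ∧
    ((F1 s).adjMatrix ℝ *ᵥ x) (.u ⟨1, by omega⟩) = x .v2 + x .a2 ∧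
    (∀ j : {i : Fin s // 2 ≤ (i : ℕ)},
      ((F1 s).adjMatrix ℝ *ᵥ x) (.u j.1) = x .v1 + x .v2 + x (.p j)) ∧
    (∀ j : {i : Fin s // 2 ≤ (i : ℕ)}, ((F1 s).adjMatrix ℝ *ᵥ x) (.p j) = x (.u j.1)) := by
  have h0 (j : {i : Fin s // 2 ≤ (i : ℕ)}) : (j.1 : ℕ) ≠ 0 := by have := j.2; omega
  have h1 (j : {i : Fin s // 2 ≤ (i : ℕ)}) : (j.1 : ℕ) ≠ 1 := by have := j.2; omega
  have h0' (j : {i : Fin s // 2 ≤ (i : ℕ)}) : (⟨0, by omega⟩ : Fin s) ≠ j.1 :=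
    fun h => h0 j (by rw [← h])
  have h1' (j : {i : Fin s // 2 ≤ (i : ℕ)}) : (⟨1, by omega⟩ : Fin s) ≠ j.1 :=
    fun h => h1 j (by rw [← h])
  have h2 (j : {i : Fin s // 2 ≤ (i : ℕ)}) : 2 ≤ (j.1 : ℕ) := j.2
  have hadj (v w : F1Vert s) : (F1 s).Adj v w ↔ v ≠ w ∧ (F1Rel s v w ∨ F1Rel s w v) := Iff.rfl
  refine ⟨?_, ?_, ?_, ?_, ?_, ?_, fun j => ?_, fun j => ?_⟩ <;>
    simp [mulVec, dotProduct, F1_sum hs, SimpleGraph.adjMatrix_apply, hadj,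
      F1Rel, h0, h1, h0', h1', h2, ← Subtype.ext_iff]

lemma F1_form (hs : 3 ≤ s) (x : F1Vert s → ℝ) :
    x ⬝ᵥ x - x ⬝ᵥ (F1 s).adjMatrix ℝ *ᵥ x =
      ∑ j : {i : Fin s // 2 ≤ (i : ℕ)}, (x (.u j.1) - x (.p j)) ^ 2
      + (x .a1 - x (.u ⟨0, by omega⟩) - x .v1) ^ 2 + (x .a2 - x (.u ⟨1, by omega⟩) - x .v1) ^ 2
      + (x .v1 + x .v2) * (x .v2 - x .v1 - 2 * (x (.u ⟨0, by omega⟩) + x (.u ⟨1, by omega⟩)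
        + ∑ j : {i : Fin s // 2 ≤ (i : ℕ)}, x (.u j.1))) := by
  obtain ⟨e1, e2, e3, e4, e5, e6, e7, e8⟩ := F1_mulVec hs x
  simp only [dotProduct, F1_sum hs, e1, e2, e3, e4, e5, e6, e7, e8]
  have q1 : ∑ j : {i : Fin s // 2 ≤ (i : ℕ)}, (x (.u j.1) - x (.p j)) ^ 2 =
      ∑ j : {i : Fin s // 2 ≤ (i : ℕ)}, x (.u j.1) * x (.u j.1)
      + ∑ j : {i : Fin s // 2 ≤ (i : ℕ)}, x (.p j) * x (.p j)
      - 2 * ∑ j : {i : Fin s // 2 ≤ (i : ℕ)}, x (.p j) * x (.u j.1) := by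
    rw [Finset.mul_sum, ← Finset.sum_add_distrib, ← Finset.sum_sub_distrib]
    exact Finset.sum_congr rfl fun j _ => by ring
  have q2 : ∑ j : {i : Fin s // 2 ≤ (i : ℕ)}, x (.u j.1) * (x .v1 + x .v2 + x (.p j)) =
      (x .v1 + x .v2) * ∑ j : {i : Fin s // 2 ≤ (i : ℕ)}, x (.u j.1)
      + ∑ j : {i : Fin s // 2 ≤ (i : ℕ)}, x (.p j) * x (.u j.1) := by
    rw [Finset.mul_sum, ← Finset.sum_add_distrib]
    exact Finset.sum_congr rfl fun j _ => by ring
  rw [q1, q2]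
  ring

/-- An eigenvector of `F₁(s)` for the eigenvalue `1`. -/
def F1vec (s : ℕ) : F1Vert s → ℝ
  | .a1 => 1
  | .a2 => -1
  | .u i => if (i : ℕ) = 0 then 1 else if (i : ℕ) = 1 then -1 else 0
  | _ => 0

lemma F1_mulVec_vec (hs : 3 ≤ s) : (F1 s).adjMatrix ℝ *ᵥ F1vec s = (1 : ℝ) • F1vec s := by
  obtain ⟨e1, e2, e3, e4, e5, e6, e7, e8⟩ := F1_mulVec hs (F1vec s)
  have hu (j : {i : Fin s // 2 ≤ (i : ℕ)}) : F1vec s (.u j.1) = 0 := by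
    have := j.2
    simp only [F1vec]
    rw [if_neg (by omega), if_neg (by omega)]
  rw [one_smul]
  funext v
  rcases v with _ | _ | _ | _ | i | j
  · rw [e1]; simp only [hu]; simp [F1vec]
  · rw [e2]; simp only [hu]; simp [F1vec]
  · rw [e3]; simp [F1vec]
  · rw [e4]; simp [F1vec]
  · obtain ⟨_ | _ | i, hi⟩ := i
    · rw [e5]; simp [F1vec]
    · rw [e6]; simp [F1vec]
    · rw [e7 ⟨⟨i + 1 + 1, hi⟩, by simp⟩]; simp [F1vec]
  · rw [e8, hu]; simp [F1vec]

/-- The indicator vector of `{v₁, a₁, a₂}`. -/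
def F1test (s : ℕ) : F1Vert s → ℝ
  | .v1 => 1
  | .a1 => 1
  | .a2 => 1
  | _ => 0

end Graph

/-- for every integer `s ≥ 3`, `λ₂(F₁(s)) = 1`: exactly one eigenvalue of its
adjacency matrix is strictly greater than `1`, and at least two of its eigenvalues (with
multiplicity) are `≥ 1`. -/
theorem lambda2_F1_eq_one (s : ℕ) (hs : 3 ≤ s) :
    eigCount (F1 s) (fun t => 1 < t) = 1 ∧ 2 ≤ eigCount (F1 s) (fun t => 1 ≤ t) := by
  classical
  unfold eigCount
  set hA := adjMatrix_isHermitian (F1 s)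
  obtain ⟨i, hi⟩ := exists_eigenvalue_gt hA (F1test s) 1 (by
    have h := F1_form hs (F1test s)
    simp [F1test] at h
    linarith)
  obtain ⟨j, hj⟩ := exists_eigenvalue_eq hA (F1vec s)
    (fun h => by simpa [F1vec] using congrFun h .a1) 1 (F1_mulVec_vec hs)
  have huniq {k : F1Vert s} (hk : 1 < hA.eigenvalues k) : k = i := by
    refine eq_of_eigenvalues_gt hA (Pi.single .v1 1 + Pi.single .v2 1) 1 (fun x hx => ?_) hk hi
    simp only [add_dotProduct, single_one_dotProduct] at hx
    have h := F1_form hs x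
    rw [hx, zero_mul, add_zero] at h
    have : 0 ≤ ∑ j : {i : Fin s // 2 ≤ (i : ℕ)}, (x (.u j.1) - x (.p j)) ^ 2 :=
      Finset.sum_nonneg fun _ _ => sq_nonneg _
    rw [one_mul, ← sub_nonneg, h]
    positivity
  have hij : i ≠ j := by
    rintro rfl
    exact hi.ne' hj
  constructor
  · rw [Finset.card_eq_one]
    refine ⟨i, Finset.ext fun k => ?_⟩
    simp only [Finset.mem_filter_univ, Finset.mem_singleton]
    exact ⟨huniq, fun h => h ▸ hi⟩
  · rw [← Finset.card_pair hij]
    refine Finset.card_le_card fun k hk => ?_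
    simp only [Finset.mem_insert, Finset.mem_singleton] at hk
    rcases hk with rfl | rfl
    · simpa using hi.le
    · simpa using hj.ge
end

section
/- Neumaier's tree theorem: a tree T satisfies λ₂(T) ≤ 1 if and only if T is isomorphic to an induced subgraph of some spider S(t,k) with 0 ≤ k ≤ t, or to an induced subgraph of G₀. -/
/-- Base relation for the spider `S(t,k)`: vertex `Sum.inl ()` is the center `c`,
`Sum.inr (Sum.inl j)` is the leaf `ℓ_{j+1}` of the star `K_{1,t}`, and
`Sum.inr (Sum.inr j)` is the pendant vertex `m_{j+1}` attached to `ℓ_{j+1}`. -/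
def SpiderRel (t k : ℕ) :
    (Unit ⊕ Fin t ⊕ Fin k) → (Unit ⊕ Fin t ⊕ Fin k) → Prop
  | .inl _, .inr (.inl _) => True
  | .inr (.inl i), .inr (.inr j) => (i : ℕ) = (j : ℕ)
  | _, _ => False

/-- The spider `S(t,k)` (for `k ≤ t`): the tree obtained from the star `K_{1,t}` by attaching
a new pendant vertex to each of the first `k` leaves. -/
def Spider (t k : ℕ) : SimpleGraph (Unit ⊕ Fin t ⊕ Fin k) :=
  SimpleGraph.fromRel (SpiderRel t k)

/-- The 6-vertex tree `G₀` with vertices `c = 0`, `a = 1`, `b = 2`, `d = 3`, `e = 4`, `f = 5`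
and edges `ca, cb, cd, de, df` (obtained from `K_{1,3}` by attaching two pendant edges to one
of its leaves). -/
def G0 : SimpleGraph (Fin 6) :=
  SimpleGraph.fromRel (fun i j =>
    (i = 0 ∧ j = 1) ∨ (i = 0 ∧ j = 2) ∨ (i = 0 ∧ j = 3) ∨
    (i = 3 ∧ j = 4) ∨ (i = 3 ∧ j = 5))

/-! ### The condition `λ₂ ≤ 1` as a statement about the quadratic form -/

open Matrix in
/-- The quadratic form of a real symmetric matrix in an orthonormal eigenbasis. -/
lemma IsHermitian.quadForm_eq {V : Type*} [Fintype V] [DecidableEq V] {A : Matrix V V ℝ}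
    (hA : A.IsHermitian) (x : V → ℝ) :
    x ⬝ᵥ (A *ᵥ x) = ∑ i, hA.eigenvalues i * (⇑(hA.eigenvectorBasis i) ⬝ᵥ x) ^ 2 := by
  have h := hA.eigenvectorBasis.sum_inner_mul_inner (WithLp.toLp 2 x) (WithLp.toLp 2 (A *ᵥ x))
  simp only [EuclideanSpace.inner_eq_star_dotProduct, star_trivial] at h
  rw [dotProduct_comm, ← h]
  refine Finset.sum_congr rfl fun i _ => ?_
  have hs : Aᵀ = A := by
    rw [← conjTranspose_eq_transpose_of_trivial]; exact hA
  have : (A *ᵥ x) ⬝ᵥ ⇑(hA.eigenvectorBasis i) =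
      hA.eigenvalues i * (⇑(hA.eigenvectorBasis i) ⬝ᵥ x) := by
    rw [dotProduct_comm, dotProduct_mulVec, ← mulVec_transpose, hs, hA.mulVec_eigenvectorBasis,
      smul_dotProduct, smul_eq_mul]
  rw [this]
  ring

open Matrix in
lemma IsHermitian.dotProduct_self_eq {V : Type*} [Fintype V] [DecidableEq V]
    {A : Matrix V V ℝ} (hA : A.IsHermitian) (x : V → ℝ) :
    x ⬝ᵥ x = ∑ i, (⇑(hA.eigenvectorBasis i) ⬝ᵥ x) ^ 2 := by
  have h := hA.eigenvectorBasis.sum_inner_mul_inner (WithLp.toLp 2 x) (WithLp.toLp 2 x)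
  simp only [EuclideanSpace.inner_eq_star_dotProduct, star_trivial] at h
  rw [← h]
  refine Finset.sum_congr rfl fun i _ => ?_
  rw [dotProduct_comm x]
  ring

open Matrix Classical in
/-- `λ₂(G) ≤ 1` exactly when `xᵀ A x ≤ xᵀ x` holds on some subspace of codimension at most one, the
orthogonal complement of a vector `v` (Courant–Fischer). -/
theorem eigCount_le_one_iff {V : Type*} [Fintype V] [DecidableEq V] (G : SimpleGraph V) :
    eigCount G (fun t => 1 < t) ≤ 1 ↔
      ∃ v : V → ℝ, ∀ x, v ⬝ᵥ x = 0 → x ⬝ᵥ (G.adjMatrix ℝ *ᵥ x) ≤ x ⬝ᵥ x := by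
  unfold eigCount
  set hA := adjMatrix_isHermitian G with hAdef
  constructor
  · intro h
    rw [Finset.card_le_one] at h
    -- `v` is an eigenvector for the only eigenvalue above `1`, if there is one, and `0` otherwise
    have key : ∃ v : V → ℝ, ∀ x, v ⬝ᵥ x = 0 → ∀ i, 1 < hA.eigenvalues i →
        ⇑(hA.eigenvectorBasis i) ⬝ᵥ x = 0 := by
      by_cases hi : ∃ i, 1 < hA.eigenvalues i
      · obtain ⟨i, hi⟩ := hi
        refine ⟨⇑(hA.eigenvectorBasis i), fun x hx j hj => ?_⟩
        rw [h j (by simpa using hj) i (by simpa using hi)]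
        exact hx
      · exact ⟨0, fun x _ i hi' => absurd ⟨i, hi'⟩ hi⟩
    obtain ⟨v, hv⟩ := key
    refine ⟨v, fun x hx => ?_⟩
    rw [IsHermitian.quadForm_eq hA, IsHermitian.dotProduct_self_eq hA]
    refine Finset.sum_le_sum fun i _ => ?_
    rcases lt_or_ge 1 (hA.eigenvalues i) with hi | hi
    · rw [hv x hx i hi]; simp
    · nlinarith [sq_nonneg (⇑(hA.eigenvectorBasis i) ⬝ᵥ x)]
  · rintro ⟨v, hv⟩
    rw [Finset.card_le_one]
    intro i hi j hj
    by_contra hij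
    replace hi : 1 < hA.eigenvalues i := by simpa using hi
    replace hj : 1 < hA.eigenvalues j := by simpa using hj
    have hon : ∀ k l, (⇑(hA.eigenvectorBasis k) : V → ℝ) ⬝ᵥ ⇑(hA.eigenvectorBasis l) =
        if k = l then 1 else 0 := by
      intro k l
      have := (orthonormal_iff_ite.1 hA.eigenvectorBasis.orthonormal) k l
      rw [EuclideanSpace.inner_eq_star_dotProduct, star_trivial, dotProduct_comm] at this
      exact this
    -- a plane spanned by two eigenvectors meets the orthogonal complement of `v`
    obtain ⟨a, b, hab, h0⟩ : ∃ a b : ℝ, (a ≠ 0 ∨ b ≠ 0) ∧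
        a * (v ⬝ᵥ ⇑(hA.eigenvectorBasis i)) + b * (v ⬝ᵥ ⇑(hA.eigenvectorBasis j)) = 0 := by
      by_cases hz : v ⬝ᵥ ⇑(hA.eigenvectorBasis i) = 0
      · exact ⟨1, 0, by simp, by simp [hz]⟩
      · exact ⟨v ⬝ᵥ ⇑(hA.eigenvectorBasis j), -(v ⬝ᵥ ⇑(hA.eigenvectorBasis i)),
          Or.inr (neg_ne_zero.2 hz), by ring⟩
    have hx := hv (a • ⇑(hA.eigenvectorBasis i) + b • ⇑(hA.eigenvectorBasis j))
      (by simpa [dotProduct_add, dotProduct_smul] using h0)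
    rw [IsHermitian.quadForm_eq hA, IsHermitian.dotProduct_self_eq hA, ← sub_nonpos,
      ← Finset.sum_sub_distrib] at hx
    simp only [dotProduct_add, dotProduct_smul, hon, smul_eq_mul] at hx
    have hnn : ∀ k ∈ Finset.univ, 0 ≤ hA.eigenvalues k *
          (a * (if k = i then 1 else 0) + b * (if k = j then 1 else 0)) ^ 2 -
          (a * (if k = i then 1 else 0) + b * (if k = j then 1 else 0)) ^ 2 := by
      intro k _
      by_cases hki : k = i
      · subst hki; simp [hij]; nlinarith [sq_nonneg a]
      · by_cases hkj : k = j
        · subst hkj; simp [hki]; nlinarith [sq_nonneg b]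
        · simp [hki, hkj]
    have hz := (Finset.sum_eq_zero_iff_of_nonneg hnn).1 (le_antisymm hx (Finset.sum_nonneg hnn))
    have h1 := hz i (Finset.mem_univ _)
    have h2 := hz j (Finset.mem_univ _)
    simp only [if_true, if_neg hij, if_neg (Ne.symm hij)] at h1 h2
    rcases hab with ha | hb
    · have : 0 < a ^ 2 := by positivity
      nlinarith
    · have : 0 < b ^ 2 := by positivity
      nlinarith

/-! ### Induced subgraphs of spiders and of `G₀` -/

open Matrix Classical in
/-- Without its centre a spider has maximum degree at most one, so `xᵀ A x ≤ xᵀ x` whenever `x`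
vanishes at the centre. -/
lemma eigCount_le_one_of_spider {V : Type*} [Fintype V] [DecidableEq V] (G : SimpleGraph V)
    {t k : ℕ} (f : G ↪g Spider t k) : eigCount G (fun t => 1 < t) ≤ 1 := by
  rw [eigCount_le_one_iff]
  -- off the centre every vertex has at most one neighbour
  have hdeg : ∀ i j j', f i ≠ .inl () → f j ≠ .inl () → f j' ≠ .inl () →
      G.Adj i j → G.Adj i j' → j = j' := by
    intro i j j' hi hj hj' h h'
    rw [← f.map_adj_iff] at h h'
    apply f.injective
    revert h h' hi hj hj'
    generalize f i = a; generalize f j = b; generalize f j' = c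
    rcases a with a | a | a <;> rcases b with b | b | b <;> rcases c with c | c | c <;>
      simp [Spider, SpiderRel, Fin.ext_iff] <;> omega
  refine ⟨fun i => if f i = .inl () then 1 else 0, fun x hx => ?_⟩
  have hx0 : ∀ i, f i = .inl () → x i = 0 := by
    intro i hi
    rw [dotProduct, Finset.sum_eq_single i] at hx
    · simpa [hi] using hx
    · intro j _ hj
      have : f j ≠ .inl () := fun h => hj (f.injective (h.trans hi.symm))
      simp [this]
    · simp
  -- `B` is the adjacency matrix of the part of `G` off the centre
  let B : V → V → ℝ := fun i j =>
    if f i ≠ .inl () ∧ f j ≠ .inl () ∧ G.Adj i j then 1 else 0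
  have hBsymm : ∀ i j, B i j = B j i := by
    intro i j
    simp only [B, G.adj_comm i j]
    congr 1
    simp only [eq_iff_iff]
    tauto
  have hBrow : ∀ i, ∑ j, B i j ≤ 1 := by
    intro i
    simp only [B]
    rw [Finset.sum_boole]
    norm_cast
    rw [Finset.card_le_one]
    intro j hj j' hj'
    simp only [Finset.mem_filter, Finset.mem_univ, true_and] at hj hj'
    exact hdeg i j j' hj.1 hj.2.1 hj'.2.1 hj.2.2 hj'.2.2
  calc x ⬝ᵥ (G.adjMatrix ℝ *ᵥ x) = ∑ i, ∑ j, B i j * (x i * x j) := by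
        simp only [dotProduct, mulVec, Finset.mul_sum]
        refine Finset.sum_congr rfl fun i _ => Finset.sum_congr rfl fun j _ => ?_
        by_cases hi : f i = .inl ()
        · simp [hx0 i hi]
        by_cases hj : f j = .inl ()
        · simp [hx0 j hj]
        simp [B, hi, hj, SimpleGraph.adjMatrix_apply]
    _ ≤ ∑ i, ∑ j, (B i j * (x i ^ 2 / 2) + B i j * (x j ^ 2 / 2)) := by
        refine Finset.sum_le_sum fun i _ => Finset.sum_le_sum fun j _ => ?_
        rw [← mul_add]
        refine mul_le_mul_of_nonneg_left ?_ ?_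
        · nlinarith [sq_nonneg (x i - x j)]
        · simp only [B]; split_ifs <;> norm_num
    _ = ∑ i, (∑ j, B i j) * x i ^ 2 := by
        simp only [Finset.sum_add_distrib]
        rw [Finset.sum_comm (f := fun i j => B i j * (x j ^ 2 / 2)), ← Finset.sum_add_distrib]
        refine Finset.sum_congr rfl fun i _ => ?_
        rw [Finset.sum_mul, ← Finset.sum_add_distrib]
        refine Finset.sum_congr rfl fun j _ => ?_
        rw [hBsymm j i]; ring
    _ ≤ ∑ i, x i ^ 2 := by
        refine Finset.sum_le_sum fun i _ => ?_
        nlinarith [hBrow i, sq_nonneg (x i)]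
    _ = x ⬝ᵥ x := by simp [dotProduct, sq]

open Matrix Classical in
lemma eigCount_le_one_of_G0 {V : Type*} [Fintype V] [DecidableEq V] (G : SimpleGraph V)
    (f : G ↪g G0) : eigCount G (fun t => 1 < t) ≤ 1 := by
  rw [eigCount_le_one_iff]
  -- `w` is the Perron eigenvector of `G₀`, for the eigenvalue `2`
  let w : Fin 6 → ℝ := ![2, 1, 1, 2, 1, 1]
  refine ⟨w ∘ f, fun x hx => ?_⟩
  let y : Fin 6 → ℝ := Function.extend f x (fun _ => 0)
  have hy : ∀ i, y (f i) = x i := fun i => f.injective.extend_apply x _ i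
  have hy0 : ∀ k, k ∉ Set.range f → y k = 0 := fun k hk =>
    Function.extend_apply' x _ k hk
  have h1 : (w ∘ f) ⬝ᵥ x = w ⬝ᵥ y :=
    Fintype.sum_of_injective f f.injective _ _ (fun k hk => by simp [hy0 k hk])
      (fun i => by simp [hy])
  have h2 : x ⬝ᵥ x = y ⬝ᵥ y :=
    Fintype.sum_of_injective f f.injective _ _ (fun k hk => by simp [hy0 k hk])
      (fun i => by simp [hy])
  have h3 : x ⬝ᵥ (G.adjMatrix ℝ *ᵥ x) = y ⬝ᵥ (G0.adjMatrix ℝ *ᵥ y) := by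
    refine Fintype.sum_of_injective f f.injective _ _ (fun k hk => by simp [hy0 k hk])
      (fun i => ?_)
    rw [hy]
    congr 1
    simp only [mulVec, dotProduct]
    refine Fintype.sum_of_injective f f.injective _ _ (fun k hk => by simp [hy0 k hk])
      (fun j => ?_)
    simp [hy, SimpleGraph.adjMatrix_apply]
  rw [h1] at hx
  rw [h2, h3]
  clear_value y
  simp only [w, dotProduct, Fin.sum_univ_six, mulVec, SimpleGraph.adjMatrix_apply] at hx ⊢
  simp [G0] at hx ⊢
  -- eliminating `y 5`, twice the difference of the two sides is
  -- `(y 1 - y 2)² + (y 4 - y 5)² + 6 (y 0 + y 3)² + 2 (2 y 3 + y 1 + y 2)²`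
  have h5 : y 5 = -(2 * y 0 + y 1 + y 2 + 2 * y 3 + y 4) := by linarith
  rw [h5]
  nlinarith [sq_nonneg (y 1 - y 2), sq_nonneg (2 * y 0 + y 1 + y 2 + 2 * y 3 + 2 * y 4),
    sq_nonneg (y 0 + y 3), sq_nonneg (2 * y 3 + y 1 + y 2)]

/-! ### Excess of vectors on the two sides of an edge -/

open Matrix Classical in
/-- The bilinear form of `A - 1`, where `A` is the adjacency matrix of `G`. -/
noncomputable def excess {V : Type*} [Fintype V] (G : SimpleGraph V) (p q : V → ℝ) : ℝ :=
  p ⬝ᵥ (G.adjMatrix ℝ *ᵥ q) - p ⬝ᵥ q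

open Matrix in
lemma excess_comm {V : Type*} [Fintype V] (G : SimpleGraph V) (p q : V → ℝ) :
    excess G p q = excess G q p := by
  classical
  unfold excess
  rw [dotProduct_comm p q, dotProduct_comm p, ← vecMul_transpose, ← dotProduct_mulVec,
    SimpleGraph.transpose_adjMatrix]

open Matrix in
lemma excess_comb {V : Type*} [Fintype V] (G : SimpleGraph V) (p q : V → ℝ) (a b : ℝ) :
    excess G (a • p + b • q) (a • p + b • q) =
      a ^ 2 * excess G p p + 2 * a * b * excess G p q + b ^ 2 * excess G q q := by
  have h : 2 * a * b * excess G p q = a * b * (excess G p q + excess G q p) := by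
    rw [excess_comm G q p]; ring
  rw [h]
  unfold excess
  simp only [mulVec_add, mulVec_smul, dotProduct_add, add_dotProduct, dotProduct_smul,
    smul_dotProduct, smul_eq_mul]
  ring

open Matrix in
/-- If `λ₂(G) ≤ 1`, the form `excess G` is not positive definite on any plane. -/
lemma excess_mul_le {V : Type*} [Fintype V] [DecidableEq V] {G : SimpleGraph V}
    (hG : eigCount G (fun t => 1 < t) ≤ 1) {p q : V → ℝ} (hp : 0 < excess G p p) :
    excess G p p * excess G q q ≤ excess G p q ^ 2 := by
  obtain ⟨v, hv⟩ := (eigCount_le_one_iff G).1 hG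
  have hv' : ∀ x, v ⬝ᵥ x = 0 → excess G x x ≤ 0 := fun x hx => sub_nonpos.2 (hv x hx)
  have hvp : v ⬝ᵥ p ≠ 0 := fun h => absurd (hv' p h) (not_le.2 hp)
  -- the combination of `p` and `q` that is orthogonal to `v`
  have h := hv' ((v ⬝ᵥ q) • p + (-(v ⬝ᵥ p)) • q) (by
    simp only [dotProduct_add, dotProduct_smul, smul_eq_mul]; ring)
  rw [excess_comb] at h
  -- multiply the inequality by `excess G p p` and complete the square
  by_contra! hlt
  have h2 : 0 < (v ⬝ᵥ p) ^ 2 := by positivity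
  nlinarith [sq_nonneg ((v ⬝ᵥ q) * excess G p p - (v ⬝ᵥ p) * excess G p q),
    mul_pos h2 (sub_pos.2 hlt), mul_nonneg hp.le (sub_nonneg.2 h)]

/-- The vertices on the `u`-side of the edge `uv`: those which can be reached from `u` without
using that edge. -/
def Side {V : Type*} (G : SimpleGraph V) (u v w : V) : Prop :=
  (G.deleteEdges {s(u, v)}).Reachable u w

section Side

variable {V : Type*} {G : SimpleGraph V} {u v w x : V}

lemma Side.refl : Side G u v u := SimpleGraph.Reachable.refl _

lemma Side.ne (hG : G.IsAcyclic) (huv : G.Adj u v) (hw : Side G u v w) : w ≠ v := by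
  rintro rfl
  exact SimpleGraph.isBridge_iff.1
    (SimpleGraph.isAcyclic_iff_forall_isBridge.1 hG (e := s(u, w)) huv) hw

lemma Side.step (hw : Side G u v w) (hwx : G.Adj w x) (h : s(w, x) ≠ s(u, v)) :
    Side G u v x :=
  SimpleGraph.Reachable.trans hw (SimpleGraph.Adj.reachable (by
    rw [SimpleGraph.deleteEdges_adj]; exact ⟨hwx, h⟩))

lemma Side.of_adj (hux : G.Adj u x) (hxv : x ≠ v) : Side G u v x :=
  Side.refl.step hux (by simp [hxv, hux.ne'])

/-- The edge `uv` is the only edge between its two sides. -/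
lemma Side.eq_of_adj (hG : G.IsAcyclic) (huv : G.Adj u v) (hw : Side G u v w)
    (hx : Side G v u x) (hwx : G.Adj w x) : w = u ∧ x = v := by
  by_cases h : s(w, x) = s(u, v)
  · rcases Sym2.eq_iff.1 h with h | h
    · exact h
    · exact absurd h.1 (hw.ne hG huv)
  · exfalso
    have h1 := hw.step hwx h
    refine SimpleGraph.isBridge_iff.1
      (SimpleGraph.isAcyclic_iff_forall_isBridge.1 hG (e := s(u, v)) huv) (h1.trans ?_)
    unfold Side at hx
    rw [Sym2.eq_swap] at hx
    exact hx.symm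

lemma Side.disjoint (hG : G.IsAcyclic) (huv : G.Adj u v) (hw : Side G u v w)
    (hw' : Side G v u w) : False := by
  refine SimpleGraph.isBridge_iff.1
      (SimpleGraph.isAcyclic_iff_forall_isBridge.1 hG (e := s(u, v)) huv) (hw.trans ?_)
  unfold Side at hw'
  rw [Sym2.eq_swap] at hw'
  exact hw'.symm

end Side

/-- There is a vector supported on the `u`-side of `uv`, with entry `1` at `u`, whose excess is
at least `α`. -/
def HasExcess {V : Type*} [Fintype V] (G : SimpleGraph V) (u v : V) (α : ℝ) : Prop :=
  ∃ p : V → ℝ, p u = 1 ∧ (∀ w, p w ≠ 0 → Side G u v w) ∧ α ≤ excess G p p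

section Obstructions

variable {V : Type*} [Fintype V] {G : SimpleGraph V} {u v : V}

open Matrix in
/-- Two vectors living on the two sides of an edge interact only through that edge; if the product
of their excesses exceeds `1`, they span a plane on which the form is positive definite. -/
lemma HasExcess.mul_le_one [DecidableEq V] (hT : G.IsAcyclic)
    (hG : eigCount G (fun t => 1 < t) ≤ 1)
    (huv : G.Adj u v) {α β : ℝ} (hα : 0 < α) (hβ : 0 < β) (hu : HasExcess G u v α)
    (hv : HasExcess G v u β) : α * β ≤ 1 := by
  classical
  obtain ⟨p, hpu, hp, hpα⟩ := hu
  obtain ⟨q, hqv, hq, hqβ⟩ := hv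
  have hpq : excess G p q = 1 := by
    have h0 : p ⬝ᵥ q = 0 := by
      refine Finset.sum_eq_zero fun i _ => ?_
      by_contra h
      exact (hp i (left_ne_zero_of_mul h)).disjoint hT huv (hq i (right_ne_zero_of_mul h))
    have h1 : p ⬝ᵥ (G.adjMatrix ℝ *ᵥ q) = 1 := by
      have hz : ∀ i j, ¬ (i = u ∧ j = v) → p i * (G.adjMatrix ℝ i j * q j) = 0 := by
        intro i j hij
        by_contra h
        have hi := left_ne_zero_of_mul h
        have hj := right_ne_zero_of_mul (right_ne_zero_of_mul h)
        have ha : G.Adj i j := by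
          by_contra ha
          simp [SimpleGraph.adjMatrix_apply, ha] at h
        exact hij ((hp i hi).eq_of_adj hT huv (hq j hj) ha)
      simp only [dotProduct, mulVec, Finset.mul_sum]
      rw [Finset.sum_eq_single u, Finset.sum_eq_single v]
      · simp [SimpleGraph.adjMatrix_apply, huv, hpu, hqv]
      · exact fun j _ hj => hz u j fun h => hj h.2
      · simp
      · exact fun i _ hi => Finset.sum_eq_zero fun j _ => hz i j fun h => hi h.1
      · simp
    unfold excess
    rw [h0, sub_zero]
    convert h1
  have h := excess_mul_le hG (p := p) (q := q) (hα.trans_le hpα)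
  rw [hpq] at h
  nlinarith [mul_le_mul hpα hqβ hβ.le (hα.le.trans hpα)]

open Matrix in
/-- The vector `(1, 2, 2)` on the path `u, x, y`; a possible extra edge `uy` would only increase the
excess. -/
lemma hasExcess_path {x y : V} (hux : G.Adj u x) (hxy : G.Adj x y) (hxv : x ≠ v) (hyu : y ≠ u) :
    HasExcess G u v 3 := by
  classical
  have hx : Side G u v x := Side.of_adj hux hxv
  have hy : Side G u v y := hx.step hxy (by simp [hxv, hux.ne'])
  refine ⟨Pi.single u 1 + Pi.single x 2 + Pi.single y 2, ?_, ?_, ?_⟩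
  · simp [hux.ne, hyu.symm]
  · intro w hw
    by_contra h
    have h1 : w ≠ u := by rintro rfl; exact h Side.refl
    have h2 : w ≠ x := by rintro rfl; exact h hx
    have h3 : w ≠ y := by rintro rfl; exact h hy
    simp [h1, h2, h3] at hw
  · have e1 := hux.ne
    have e2 := hxy.ne
    unfold excess
    simp [add_dotProduct, mulVec_add, single_dotProduct, mulVec_single, SimpleGraph.adjMatrix_apply,
      hux, hxy, hux.symm, hxy.symm, e1, e2, hyu, e1.symm, e2.symm, hyu.symm]
    split_ifs <;> norm_num

open Matrix in
lemma hasExcess_cherry {a b : V} (ha : G.Adj u a) (hb : G.Adj u b) (hav : a ≠ v) (hbv : b ≠ v)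
    (hab : a ≠ b) : HasExcess G u v 1 := by
  classical
  have hx : Side G u v a := Side.of_adj ha hav
  have hy : Side G u v b := Side.of_adj hb hbv
  refine ⟨Pi.single u 1 + Pi.single a 1 + Pi.single b 1, ?_, ?_, ?_⟩
  · simp [ha.ne, hb.ne]
  · intro w hw
    by_contra h
    have h1 : w ≠ u := by rintro rfl; exact h Side.refl
    have h2 : w ≠ a := by rintro rfl; exact h hx
    have h3 : w ≠ b := by rintro rfl; exact h hy
    simp [h1, h2, h3] at hw
  · have e1 := ha.ne
    have e2 := hb.ne
    unfold excess
    simp [add_dotProduct, mulVec_add, single_dotProduct, mulVec_single, SimpleGraph.adjMatrix_apply,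
      ha, hb, ha.symm, hb.symm, e1, e2, hab, e1.symm, e2.symm, hab.symm]
    split_ifs <;> norm_num

open Matrix in
lemma hasExcess_claw {a b c : V} (ha : G.Adj u a) (hb : G.Adj u b) (hc : G.Adj u c)
    (hav : a ≠ v) (hbv : b ≠ v) (hcv : c ≠ v) (hab : a ≠ b) (hac : a ≠ c) (hbc : b ≠ c) :
    HasExcess G u v 2 := by
  classical
  have hx : Side G u v a := Side.of_adj ha hav
  have hy : Side G u v b := Side.of_adj hb hbv
  have hz : Side G u v c := Side.of_adj hc hcv
  refine ⟨Pi.single u 1 + Pi.single a 1 + Pi.single b 1 + Pi.single c 1, ?_, ?_, ?_⟩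
  · simp [ha.ne, hb.ne, hc.ne]
  · intro w hw
    by_contra h
    have h1 : w ≠ u := by rintro rfl; exact h Side.refl
    have h2 : w ≠ a := by rintro rfl; exact h hx
    have h3 : w ≠ b := by rintro rfl; exact h hy
    have h4 : w ≠ c := by rintro rfl; exact h hz
    simp [h1, h2, h3, h4] at hw
  · have e1 := ha.ne
    have e2 := hb.ne
    have e3 := hc.ne
    unfold excess
    simp [add_dotProduct, mulVec_add, single_dotProduct, mulVec_single, SimpleGraph.adjMatrix_apply,
      ha, hb, hc, ha.symm, hb.symm, hc.symm, e1, e2, e3, hab, hac, hbc, e1.symm, e2.symm, e3.symm,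
      hab.symm, hac.symm, hbc.symm]
    split_ifs <;> norm_num

end Obstructions

/-! ### Spiders described by their centre -/

/-- Every neighbour of `c` has at most one neighbour other than `c`, and the latter is a leaf. -/
def IsSpiderCenter {V : Type*} (G : SimpleGraph V) (c : V) : Prop :=
  ∀ x, G.Adj c x → ∀ y, G.Adj x y → y ≠ c →
    (∀ y', G.Adj x y' → y' ≠ c → y' = y) ∧ (∀ z, G.Adj y z → z = x)

/-- A vertex set that is closed under adjacency exhausts a connected graph. -/
lemma SimpleGraph.Connected.forall_of_closed {V : Type*} {G : SimpleGraph V} (hG : G.Connected)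
    {P : V → Prop} (c : V) (hc : P c) (hP : ∀ x y, P x → G.Adj x y → P y) (w : V) : P w := by
  obtain ⟨p⟩ := hG.preconnected c w
  induction p with
  | nil => exact hc
  | cons h _ ih => exact ih (hP _ _ hc h)

/-- A connected graph with a spider centre embeds into `S(n,n)`, where `n` is its order: each
neighbour of the centre goes to the leaf carrying its own index, and each remaining vertex to the
pendant vertex carrying the index of its unique neighbour. -/
lemma IsSpiderCenter.embeds {V : Type*} [Fintype V] {G : SimpleGraph V} (hG : G.Connected) {c : V}
    (hc : IsSpiderCenter G c) : ∃ t k : ℕ, k ≤ t ∧ Nonempty (G ↪g Spider t k) := by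
  classical
  have hcov : ∀ w, w = c ∨ G.Adj c w ∨ (w ≠ c ∧ ¬ G.Adj c w ∧ ∃ x, G.Adj c x ∧ G.Adj x w) := by
    refine hG.forall_of_closed c (Or.inl rfl) ?_
    rintro x y (rfl | hx | ⟨h1, h2, z, hz, hzx⟩) hxy
    · exact Or.inr (Or.inl hxy)
    · by_cases hy : y = c
      · exact Or.inl hy
      by_cases hy' : G.Adj c y
      · exact Or.inr (Or.inl hy')
      · exact Or.inr (Or.inr ⟨hy, hy', x, hx, hxy⟩)
    · rw [(hc z hz x hzx h1).2 y hxy]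
      exact Or.inr (Or.inl hz)
  have hpar : ∀ w, ∃ x, (w ≠ c ∧ ¬ G.Adj c w) → G.Adj c x ∧ G.Adj x w := by
    intro w
    rcases hcov w with h | h | ⟨_, _, x, hx⟩
    · exact ⟨w, fun h' => absurd h h'.1⟩
    · exact ⟨w, fun h' => absurd h h'.2⟩
    · exact ⟨x, fun _ => hx⟩
  choose par hpar using hpar
  -- no two neighbours of the centre are adjacent
  have hN : ∀ x y, G.Adj c x → G.Adj c y → ¬ G.Adj x y := fun x y hx hy hxy =>
    hx.ne ((hc x hx y hxy hy.ne').2 c hy.symm)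
  let e := Fintype.equivFin V
  let f : V → Unit ⊕ Fin (Fintype.card V) ⊕ Fin (Fintype.card V) := fun w =>
    if w = c then .inl () else if G.Adj c w then .inr (.inl (e w)) else .inr (.inr (e (par w)))
  have f1 : f c = .inl () := by simp [f]
  have f2 : ∀ w, G.Adj c w → f w = .inr (.inl (e w)) := fun w hw => by
    simp [f, hw, hw.ne']
  have f3 : ∀ w, w ≠ c → ¬ G.Adj c w → f w = .inr (.inr (e (par w))) := fun w h h' => by
    simp [f, h, h']
  refine ⟨Fintype.card V, Fintype.card V, le_rfl, ⟨⟨⟨f, ?_⟩, ?_⟩⟩⟩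
  · intro w w' h
    rcases hcov w with rfl | hw | ⟨hw, hw', -⟩ <;> rcases hcov w' with rfl | hv | ⟨hv, hv', -⟩
    · rfl
    · rw [f1, f2 _ hv] at h; simp at h
    · rw [f1, f3 _ hv hv'] at h; simp at h
    · rw [f1, f2 _ hw] at h; simp at h
    · rw [f2 _ hv, f2 _ hw] at h; simpa using h
    · rw [f3 _ hv hv', f2 _ hw] at h; simp at h
    · rw [f1, f3 _ hw hw'] at h; simp at h
    · rw [f2 _ hv, f3 _ hw hw'] at h; simp at h
    · rw [f3 _ hv hv', f3 _ hw hw'] at h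
      have hpp : par w = par w' := by simpa using h
      have p1 := hpar w ⟨hw, hw'⟩
      have p2 := hpar w' ⟨hv, hv'⟩
      rw [hpp] at p1
      exact (hc _ p1.1 w' p2.2 hv).1 w p1.2 hw
  · intro w w'
    change (Spider _ _).Adj (f w) (f w') ↔ G.Adj w w'
    rcases hcov w with rfl | hw | ⟨hw, hw', -⟩ <;> rcases hcov w' with rfl | hv | ⟨hv, hv', -⟩
    · simp
    · rw [f1, f2 _ hv]; simp [Spider, SpiderRel, hv]
    · rw [f1, f3 _ hv hv']; simp [Spider, SpiderRel, hv']
    · rw [f1, f2 _ hw]; simp [Spider, SpiderRel, hw.symm]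
    · rw [f2 _ hv, f2 _ hw]; simp [Spider, SpiderRel, hN _ _ hw hv]
    · rw [f3 _ hv hv', f2 _ hw]
      have p2 := hpar w' ⟨hv, hv'⟩
      simp only [Spider, SimpleGraph.fromRel_adj, SpiderRel, or_false, ne_eq, Sum.inr.injEq,
        reduceCtorEq, not_false_eq_true, true_and, ← Fin.ext_iff, EmbeddingLike.apply_eq_iff_eq]
      constructor
      · rintro rfl; exact p2.2
      · exact fun h => (hc _ p2.1 w' p2.2 hv).2 w h.symm
    · rw [f1, f3 _ hw hw']; simp [Spider, SpiderRel, G.adj_comm w, hw']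
    · rw [f2 _ hv, f3 _ hw hw']
      have p2 := hpar w ⟨hw, hw'⟩
      simp only [Spider, SimpleGraph.fromRel_adj, SpiderRel, false_or, ne_eq, Sum.inr.injEq,
        reduceCtorEq, not_false_eq_true, true_and, ← Fin.ext_iff, EmbeddingLike.apply_eq_iff_eq]
      constructor
      · rintro rfl; exact p2.2.symm
      · exact fun h => (hc _ p2.1 w p2.2 hw).2 w' h
    · rw [f3 _ hv hv', f3 _ hw hw']
      have p2 := hpar w ⟨hw, hw'⟩
      have : ¬ G.Adj w w' := fun h => hv' ((hc _ p2.1 w p2.2 hw).2 w' h ▸ p2.1)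
      simp [Spider, SpiderRel, this]

/-! ### Classification of the trees with `λ₂ ≤ 1` -/

section Classification

variable {V : Type*} [Fintype V] [DecidableEq V] {G : SimpleGraph V}

/-- The middle vertex of a path on five vertices is the centre of a spider. -/
lemma isSpiderCenter_of_path (hT : G.IsAcyclic) (hG : eigCount G (fun t => 1 < t) ≤ 1)
    {c b d a e : V} (hb : G.Adj c b) (hd : G.Adj c d) (hbd : b ≠ d) (ha : G.Adj b a) (hac : a ≠ c)
    (he : G.Adj d e) (hec : e ≠ c) : IsSpiderCenter G c := by
  intro x hx y hy hyc
  -- one of the two legs of the path avoids `x`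
  have hleg : HasExcess G c x 3 := by
    by_cases hbx : b = x
    · exact hasExcess_path hd he (fun h => hbd (hbx.trans h.symm)) hec
    · exact hasExcess_path hb ha hbx hac
  refine ⟨fun y' hy' hyc' => ?_, fun z hz => ?_⟩
  · by_contra hne
    have := hleg.mul_le_one hT hG hx (by norm_num) one_pos
      (hasExcess_cherry hy' hy hyc' hyc hne)
    norm_num at this
  · by_contra hne
    have := hleg.mul_le_one hT hG hx (by norm_num) (by norm_num)
      (hasExcess_path hy hz hyc hne)
    norm_num at this

/-- If both ends of an edge have two further neighbours, these six vertices are all of `G`. -/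
lemma embeds_G0 (hT : G.IsTree) (hG : eigCount G (fun t => 1 < t) ≤ 1)
    {u v a b c d : V} (huv : G.Adj u v) (ha : G.Adj u a) (hb : G.Adj u b) (hav : a ≠ v)
    (hbv : b ≠ v) (hab : a ≠ b) (hc : G.Adj v c) (hd : G.Adj v d) (hcu : c ≠ u) (hdu : d ≠ u)
    (hcd : c ≠ d) : Nonempty (G ↪g G0) := by
  classical
  -- By the symmetries of `G₀` it suffices to determine the neighbourhoods of one inner vertex `u`
  -- and of one leaf `a` at it.
  have aux : ∀ {u v a b c d : V}, G.Adj u v → G.Adj u a → G.Adj u b → a ≠ v → b ≠ v →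
      a ≠ b → G.Adj v c → G.Adj v d → c ≠ u → d ≠ u → c ≠ d →
      (∀ x, G.Adj u x ↔ x = v ∨ x = a ∨ x = b) ∧ ∀ x, G.Adj a x ↔ x = u := by
    intro u v a b c d huv ha hb hav hbv hab hc hd hcu hdu hcd
    have hv := hasExcess_cherry hc hd hcu hdu hcd
    refine ⟨fun x => ⟨fun hx => ?_, ?_⟩, fun x => ⟨fun hx => ?_, ?_⟩⟩
    · by_contra! h
      have := (hasExcess_claw ha hb hx hav hbv h.1 hab h.2.1.symm h.2.2.symm).mul_le_one
        hT.isAcyclic hG huv (by norm_num) one_pos hv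
      norm_num at this
    · rintro (rfl | rfl | rfl) <;> assumption
    · by_contra h
      have := (hasExcess_path ha hx hav h).mul_le_one
        hT.isAcyclic hG huv (by norm_num) one_pos hv
      norm_num at this
    · rintro rfl; exact ha.symm
  obtain ⟨Nu, Na⟩ := aux huv ha hb hav hbv hab hc hd hcu hdu hcd
  obtain ⟨-, Nb⟩ := aux huv hb ha hbv hav hab.symm hc hd hcu hdu hcd
  obtain ⟨Nv, Nc⟩ := aux huv.symm hc hd hcu hdu hcd ha hb hav hbv hab
  obtain ⟨-, Nd⟩ := aux huv.symm hd hc hdu hcu hcd.symm ha hb hav hbv hab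
  have hcov : ∀ w, w = u ∨ w = a ∨ w = b ∨ w = v ∨ w = c ∨ w = d := by
    refine hT.connected.forall_of_closed u (Or.inl rfl) ?_
    rintro x y (rfl | rfl | rfl | rfl | rfl | rfl) hxy
    · have := (Nu y).1 hxy; tauto
    · have := (Na y).1 hxy; tauto
    · have := (Nb y).1 hxy; tauto
    · have := (Nv y).1 hxy; tauto
    · have := (Nc y).1 hxy; tauto
    · have := (Nd y).1 hxy; tauto
  have n1 := huv.ne
  have n2 := ha.ne
  have n3 := hb.ne
  have n4 := hc.ne
  have n5 := hd.ne
  have m1 : ∀ z, G.Adj v z → a ≠ z ∧ b ≠ z := fun z hz =>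
    ⟨by rintro rfl; exact n1.symm ((Na v).1 hz.symm),
      by rintro rfl; exact n1.symm ((Nb v).1 hz.symm)⟩
  obtain ⟨n6, n7⟩ := m1 c hc
  obtain ⟨n8, n9⟩ := m1 d hd
  let g : Fin 6 → V := ![u, a, b, v, c, d]
  have hg : Function.Bijective g := by
    constructor
    · intro i j h
      fin_cases i <;> fin_cases j <;> first
        | rfl
        | (exfalso; simp only [g] at h; revert h; first | assumption | exact Ne.symm (by assumption))
    · intro w
      rcases hcov w with rfl | rfl | rfl | rfl | rfl | rfl
      exacts [⟨0, rfl⟩, ⟨1, rfl⟩, ⟨2, rfl⟩, ⟨3, rfl⟩, ⟨4, rfl⟩, ⟨5, rfl⟩]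
  have hiso : ∀ i j, G.Adj (g i) (g j) ↔ G0.Adj i j := by
    have A0 : ∀ j, G.Adj (g 0) (g j) ↔ j = 3 ∨ j = 1 ∨ j = 2 := fun j => by
      simp only [← hg.1.eq_iff]; exact Nu (g j)
    have A1 : ∀ j, G.Adj (g 1) (g j) ↔ j = 0 := fun j => by
      simp only [← hg.1.eq_iff]; exact Na (g j)
    have A2 : ∀ j, G.Adj (g 2) (g j) ↔ j = 0 := fun j => by
      simp only [← hg.1.eq_iff]; exact Nb (g j)
    have A3 : ∀ j, G.Adj (g 3) (g j) ↔ j = 0 ∨ j = 4 ∨ j = 5 := fun j => by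
      simp only [← hg.1.eq_iff]; exact Nv (g j)
    have A4 : ∀ j, G.Adj (g 4) (g j) ↔ j = 3 := fun j => by
      simp only [← hg.1.eq_iff]; exact Nc (g j)
    have A5 : ∀ j, G.Adj (g 5) (g j) ↔ j = 3 := fun j => by
      simp only [← hg.1.eq_iff]; exact Nd (g j)
    intro i j
    fin_cases i
    · refine (A0 j).trans ?_; fin_cases j <;> simp [G0]
    · refine (A1 j).trans ?_; fin_cases j <;> simp [G0]
    · refine (A2 j).trans ?_; fin_cases j <;> simp [G0]
    · refine (A3 j).trans ?_; fin_cases j <;> simp [G0]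
    · refine (A4 j).trans ?_; fin_cases j <;> simp [G0]
    · refine (A5 j).trans ?_; fin_cases j <;> simp [G0]
  let φ : G0 ≃g G := ⟨Equiv.ofBijective g hg, hiso _ _⟩
  exact ⟨φ.symm.toEmbedding⟩

/-- Whichever of the following holds first decides the case: `G` contains a path on five vertices,
so that its middle vertex is a spider centre; `G` has two adjacent vertices of degree at least `3`,
so that `G` is `G₀`; or neither, and then a vertex of maximum degree is a spider centre. -/
lemma classification (hT : G.IsTree) (hG : eigCount G (fun t => 1 < t) ≤ 1) :
    (∃ t k : ℕ, k ≤ t ∧ Nonempty (G ↪g Spider t k)) ∨ Nonempty (G ↪g G0) := by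
  classical
  by_cases h1 : ∃ c b d a e, G.Adj c b ∧ G.Adj c d ∧ b ≠ d ∧ G.Adj b a ∧ a ≠ c ∧ G.Adj d e ∧ e ≠ c
  · obtain ⟨c, b, d, a, e, hb, hd, hbd, ha, hac, he, hec⟩ := h1
    exact Or.inl ((isSpiderCenter_of_path hT.isAcyclic hG hb hd hbd ha hac he hec).embeds
      hT.connected)
  have hother : ∀ u v : V, 3 ≤ G.degree u →
      ∃ a b, G.Adj u a ∧ G.Adj u b ∧ a ≠ v ∧ b ≠ v ∧ a ≠ b := by
    intro u v h
    have : 1 < ((G.neighborFinset u).erase v).card := by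
      have := Finset.pred_card_le_card_erase (s := G.neighborFinset u) (a := v)
      rw [G.card_neighborFinset_eq_degree] at this
      omega
    obtain ⟨a, ha, b, hb, hab⟩ := Finset.one_lt_card.1 this
    simp only [Finset.mem_erase, SimpleGraph.mem_neighborFinset] at ha hb
    exact ⟨a, b, ha.2, hb.2, ha.1, hb.1, hab⟩
  by_cases h2 : ∃ u v, G.Adj u v ∧ 3 ≤ G.degree u ∧ 3 ≤ G.degree v
  · obtain ⟨u, v, huv, hu, hv⟩ := h2
    obtain ⟨a, b, ha, hb, hav, hbv, hab⟩ := hother u v hu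
    obtain ⟨c, d, hc, hd, hcu, hdu, hcd⟩ := hother v u hv
    exact Or.inr (embeds_G0 hT hG huv ha hb hav hbv hab hc hd hcu hdu hcd)
  left
  have := hT.connected.nonempty
  -- a vertex of maximum degree is the centre of the spider
  obtain ⟨c, hc⟩ := G.exists_maximal_degree_vertex
  have hmax : ∀ x, G.degree x ≤ G.degree c := fun x => hc ▸ G.degree_le_maxDegree x
  refine IsSpiderCenter.embeds hT.connected (c := c) ?_
  intro x hx y hy hyc
  refine ⟨fun y' hy' hyc' => ?_, fun z hz => ?_⟩
  · by_contra hne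
    have h3 : 2 < G.degree x := by
      rw [← G.card_neighborFinset_eq_degree, Finset.two_lt_card]
      exact ⟨c, by simpa using hx.symm, y, by simpa using hy, y', by simpa using hy', hyc.symm,
        hyc'.symm, Ne.symm hne⟩
    exact h2 ⟨c, x, hx, h3.trans_le (hmax x), h3⟩
  · by_contra hne
    have h3 : 1 < G.degree x := by
      rw [← G.card_neighborFinset_eq_degree, Finset.one_lt_card]
      exact ⟨c, by simpa using hx.symm, y, by simpa using hy, hyc.symm⟩
    have h4 : 1 < G.degree c := h3.trans_le (hmax x)
    rw [← G.card_neighborFinset_eq_degree] at h4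
    obtain ⟨w, hw, hwx⟩ := Finset.exists_mem_ne h4 x
    exact h1 ⟨x, c, y, w, z, hx.symm, hy, hyc.symm, by simpa using hw, hwx, hz, hne⟩

end Classification

/-- Neumaier: a tree `T` satisfies `λ₂(T) ≤ 1` (at most one adjacency
eigenvalue exceeds `1`) if and only if `T` is isomorphic to an induced subgraph of some
spider `S(t,k)` with `k ≤ t`, or to an induced subgraph of `G₀`. -/
theorem lambda2_le_one_tree_iff {V : Type*} [Fintype V] [DecidableEq V]
    (G : SimpleGraph V) (hT : G.IsTree) :
    eigCount G (fun t => 1 < t) ≤ 1 ↔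
      ((∃ t k : ℕ, k ≤ t ∧ Nonempty (G ↪g Spider t k)) ∨ Nonempty (G ↪g G0)) := by
  refine ⟨classification hT, ?_⟩
  rintro (⟨t, k, -, ⟨f⟩⟩ | hf)
  · exact eigCount_le_one_of_spider G f
  · exact hf.elim (eigCount_le_one_of_G0 G)
end

section
/- Suppose G is a connected graph with λ₂(G) ≤ 1 which has neither K₅ nor K_{3,3} as a minor and whose girth equals 5, and let x₁x₂x₃x₄x₅x₁ be a 5-cycle in G. Then at most 3 vertices of G lie outside the cycle; in particular G has at most 8 vertices. -/
/-- `HasMinor G H` : `H` is a minor of `G`, witnessed by a family of pairwise disjoint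
nonempty branch sets, each inducing a connected subgraph of `G`, such that every edge of `H`
is realized by an edge of `G` between the corresponding branch sets. -/
def HasMinor {V : Type*} {W : Type*} (G : SimpleGraph V) (H : SimpleGraph W) : Prop :=
  ∃ B : W → Set V,
    (∀ w, (B w).Nonempty) ∧
    (Pairwise fun w₁ w₂ => Disjoint (B w₁) (B w₂)) ∧
    (∀ w, (G.induce (B w)).Connected) ∧
    (∀ ⦃w₁ w₂⦄, H.Adj w₁ w₂ → ∃ a ∈ B w₁, ∃ b ∈ B w₂, G.Adj a b)

/-- `G` is planar in the sense of Wagner: it has neither `K₅` nor `K_{3,3}` as a minor. -/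
def WagnerPlanar {V : Type*} (G : SimpleGraph V) : Prop :=
  ¬ HasMinor G (⊤ : SimpleGraph (Fin 5)) ∧
    ¬ HasMinor G (completeBipartiteGraph (Fin 3) (Fin 3))

/-! ### Quadratic forms and the second eigenvalue -/

open scoped Matrix

/-- If all eigenvalues but one are at most `1`, the Rayleigh quotient is at most `1` on the
orthogonal complement of the exceptional eigenvector. -/
lemma dotProduct_mulVec_le_of_orthogonal {V : Type*} [Fintype V] [DecidableEq V]
    {A : Matrix V V ℝ} (hA : A.IsHermitian) (i₀ : V)
    (hle : ∀ i, i ≠ i₀ → hA.eigenvalues i ≤ 1) (w : V → ℝ)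
    (horth : (hA.eigenvectorBasis i₀ : V → ℝ) ⬝ᵥ w = 0) :
    w ⬝ᵥ A *ᵥ w ≤ w ⬝ᵥ w := by
  have parseval (u v : V → ℝ) : u ⬝ᵥ v = ∑ i, ((hA.eigenvectorBasis i : V → ℝ) ⬝ᵥ u) *
      ((hA.eigenvectorBasis i : V → ℝ) ⬝ᵥ v) := by
    have h := hA.eigenvectorBasis.sum_inner_mul_inner (WithLp.toLp 2 u) (WithLp.toLp 2 v)
    simp only [EuclideanSpace.inner_eq_star_dotProduct, star_trivial] at h
    rw [dotProduct_comm, ← h]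
    exact Finset.sum_congr rfl fun i _ => by
      rw [dotProduct_comm v]
  have hcoef (i : V) : (hA.eigenvectorBasis i : V → ℝ) ⬝ᵥ (A *ᵥ w) =
      hA.eigenvalues i * ((hA.eigenvectorBasis i : V → ℝ) ⬝ᵥ w) := by
    have hT : Aᵀ = A := by
      rw [← Matrix.conjTranspose_eq_transpose_of_trivial]; exact hA
    rw [Matrix.dotProduct_mulVec, ← Matrix.mulVec_transpose, hT, hA.mulVec_eigenvectorBasis,
      smul_dotProduct, smul_eq_mul]
  rw [parseval w (A *ᵥ w), parseval w w]
  refine Finset.sum_le_sum fun i _ => ?_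
  rw [hcoef]
  by_cases hi : i = i₀
  · subst hi; simp [horth]
  · nlinarith [hle i hi, mul_self_nonneg ((hA.eigenvectorBasis i : V → ℝ) ⬝ᵥ w)]

/-- Restriction of the previous bound to an induced subgraph: vectors on `H` are extended by zero
to `G`, and every plane spanned by two of them meets the hyperplane orthogonal to the exceptional
eigenvector. -/
lemma exists_combination_le {V : Type*} [Fintype V] [DecidableEq V]
    (G : SimpleGraph V) (hl : eigCount G (fun t => 1 < t) ≤ 1) {n : ℕ}
    (H : SimpleGraph (Fin n)) [DecidableRel H.Adj] (f : H ↪g G) (a b : Fin n → ℝ) :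
    ∃ s t : ℝ, (s ≠ 0 ∨ t ≠ 0) ∧
      (s • a + t • b) ⬝ᵥ H.adjMatrix ℝ *ᵥ (s • a + t • b) ≤
        (s • a + t • b) ⬝ᵥ (s • a + t • b) := by
  classical
  by_cases hn : Nonempty V
  swap
  · have : IsEmpty (Fin n) := ⟨fun j => hn ⟨f j⟩⟩
    exact ⟨1, 0, by simp, by simp [dotProduct]⟩
  set hA := adjMatrix_isHermitian G
  obtain ⟨i₀, hi₀⟩ : ∃ i₀, ∀ i, i ≠ i₀ → hA.eigenvalues i ≤ 1 := by
    obtain ⟨i₀, h⟩ := (Finset.card_le_one_iff_subset_singleton).1 hl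
    refine ⟨i₀, fun i hi => ?_⟩
    by_contra! hlt
    exact hi (by simpa using h (Finset.mem_filter.2 ⟨Finset.mem_univ i, hlt⟩))
  set e : V → ℝ := (hA.eigenvectorBasis i₀).ofLp
  have hinj : Function.Injective f := f.injective
  have sum_ext (c : Fin n → ℝ) (g : V → ℝ) :
      Function.extend f c 0 ⬝ᵥ g = c ⬝ᵥ (g ∘ f) := by
    refine (Fintype.sum_of_injective f hinj _ _ (fun v hv => ?_) fun j => ?_).symm
    · rw [Function.extend_apply' _ _ _ hv]; simp
    · simp [hinj.extend_apply]
  have key (c : Fin n → ℝ) (hc : (e ∘ f) ⬝ᵥ c = 0) :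
      c ⬝ᵥ H.adjMatrix ℝ *ᵥ c ≤ c ⬝ᵥ c := by
    have h := dotProduct_mulVec_le_of_orthogonal hA i₀ hi₀ (Function.extend f c 0)
      (by rw [dotProduct_comm, sum_ext, dotProduct_comm]; exact hc)
    rw [sum_ext, sum_ext, Function.extend_comp hinj] at h
    convert h using 2
    funext j
    simp only [Matrix.mulVec, Function.comp_apply]
    rw [dotProduct_comm _ (Function.extend f c 0), sum_ext, dotProduct_comm]
    congr 1
    funext k
    simp [SimpleGraph.adjMatrix_apply]
  -- the combination orthogonal to the eigenvector of the only eigenvalue that may exceed `1`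
  by_cases h0 : (e ∘ f) ⬝ᵥ a = 0
  · exact ⟨1, 0, by simp, key _ (by simp [h0])⟩
  · refine ⟨(e ∘ f) ⬝ᵥ b, -((e ∘ f) ⬝ᵥ a), Or.inr (neg_ne_zero.2 h0), key _ ?_⟩
    simp only [dotProduct_add, dotProduct_smul, smul_eq_mul]
    ring

/-! ### Two forbidden trees -/

/-- The path `0, 1, 2, 3, 4` with a further leaf `5` attached at `e`. The case `e = 4` is the
path `P₆`, the case `e = 3` is the tree `D₆`. -/
def pathWithLeaf (e : Fin 6) : SimpleGraph (Fin 6) :=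
  SimpleGraph.fromRel fun j k => (j.val + 1 = k.val ∧ k.val ≤ 4) ∨ (j = e ∧ k = 5)

lemma pathWithLeaf_adj (e j k : Fin 6) : (pathWithLeaf e).Adj j k ↔ j ≠ k ∧
    (((j.val + 1 = k.val ∧ k.val ≤ 4) ∨ (j = e ∧ k = 5)) ∨
      ((k.val + 1 = j.val ∧ j.val ≤ 4) ∨ (k = e ∧ j = 5))) :=
  SimpleGraph.fromRel_adj _ j k

instance (e : Fin 6) : DecidableRel (pathWithLeaf e).Adj := fun j k =>
  decidable_of_iff' _ (pathWithLeaf_adj e j k)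

lemma forall_fin_six {p : Fin 6 → Prop} :
    (∀ i, p i) ↔ p 0 ∧ p 1 ∧ p 2 ∧ p 3 ∧ p 4 ∧ p 5 := by
  refine ⟨fun h => ⟨h 0, h 1, h 2, h 3, h 4, h 5⟩, ?_⟩
  rintro ⟨h0, h1, h2, h3, h4, h5⟩ i
  match i with
  | 0 => exact h0
  | 1 => exact h1
  | 2 => exact h2
  | 3 => exact h3
  | 4 => exact h4
  | 5 => exact h5

/-- Neither `P₆` nor `D₆` is an induced subgraph of `G`. As adjacency is symmetric, the embedding
`f` is described by its behaviour on pairs `j < k` only. -/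
lemma not_embeds_pathWithLeaf {V : Type*} [Fintype V] [DecidableEq V]
    (G : SimpleGraph V) (hl : eigCount G (fun t => 1 < t) ≤ 1) (e : Fin 6) (he : e = 3 ∨ e = 4)
    (f : Fin 6 → V) (hf : ∀ j k, j < k → f j ≠ f k)
    (hadj : ∀ j k, j < k → (G.Adj (f j) (f k) ↔ (pathWithLeaf e).Adj j k)) : False := by
  have hinj : Function.Injective f := fun j k h => by
    by_contra hne
    rcases lt_or_gt_of_ne hne with hlt | hlt
    · exact hf j k hlt h
    · exact hf k j hlt h.symm
  have hadj' (j k : Fin 6) : G.Adj (f j) (f k) ↔ (pathWithLeaf e).Adj j k := by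
    rcases lt_trichotomy j k with hlt | rfl | hlt
    · exact hadj j k hlt
    · simp
    · rw [G.adj_comm, hadj k j hlt, SimpleGraph.adj_comm]
  -- indicator vectors of the subtrees on `{2, 3, 4, 5}` and `{0, 1, 2}`, which have Rayleigh
  -- quotients `3 / 2` and `4 / 3`
  obtain ⟨s, t, hst, h⟩ := exists_combination_le G hl (pathWithLeaf e) ⟨⟨f, hinj⟩, hadj' _ _⟩
    ![0, 0, 1, 1, 1, 1] ![1, 1, 1, 0, 0, 0]
  have hq : 2 * s ^ 2 + 2 * s * t + t ^ 2 ≤ 0 := by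
    rcases he with rfl | rfl <;>
    · simp [Matrix.mulVec, dotProduct, Fin.sum_univ_six, SimpleGraph.adjMatrix_apply,
        pathWithLeaf_adj] at h
      linarith
  have hs : s = 0 := by nlinarith [sq_nonneg (s + t)]
  have ht : t = 0 := by subst hs; nlinarith
  simp [hs, ht] at hst

/-! ### Girth five -/

/-- Girth five excludes triangles. -/
lemma not_adj_of_five_le_egirth {V : Type*} {G : SimpleGraph V} (hg : 5 ≤ G.egirth) {a b c : V}
    (hab : G.Adj a b) (hbc : G.Adj b c) : ¬ G.Adj a c := by
  intro hac
  have hcyc : (SimpleGraph.Walk.cons hac (.cons hbc.symm (.cons hab.symm .nil))).IsCycle := by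
    simp [SimpleGraph.Walk.cons_isCycle_iff, hab.ne, hab.ne.symm, hbc.ne.symm, hac.ne.symm,
      hac.ne]
  have h := hg.trans (SimpleGraph.egirth_le_length hcyc)
  revert h
  simp only [SimpleGraph.Walk.length_cons, SimpleGraph.Walk.length_nil]
  decide

/-- Girth five excludes 4-cycles: two distinct vertices have at most one common neighbour. -/
lemma eq_of_five_le_egirth {V : Type*} {G : SimpleGraph V} (hg : 5 ≤ G.egirth) {a b c d : V}
    (hac : a ≠ c) (hab : G.Adj a b) (hbc : G.Adj b c) (had : G.Adj a d) (hdc : G.Adj d c) :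
    b = d := by
  by_contra hbd
  have hcyc : (SimpleGraph.Walk.cons hab
      (.cons hbc (.cons hdc.symm (.cons had.symm .nil)))).IsCycle := by
    simp [SimpleGraph.Walk.cons_isCycle_iff, hab.ne, hab.ne.symm, hbc.ne, had.ne, hac, hac.symm,
      hdc.ne.symm, had.ne.symm, hbd]
  have h := hg.trans (SimpleGraph.egirth_le_length hcyc)
  revert h
  simp only [SimpleGraph.Walk.length_cons, SimpleGraph.Walk.length_nil]
  decide

/-! ### The neighbourhood of a pentagon -/

/-- `x` lists the vertices of a 5-cycle of `G` in cyclic order, indices being taken modulo `5`. -/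
structure IsPentagon {V : Type*} (G : SimpleGraph V) (x : Fin 5 → V) : Prop where
  injective : Function.Injective x
  adj_succ : ∀ i, G.Adj (x i) (x (i + 1))

namespace IsPentagon

variable {V : Type*} {G : SimpleGraph V} {x : Fin 5 → V}

lemma rotate (hx : IsPentagon G x) (k : Fin 5) : IsPentagon G fun i => x (i + k) where
  injective := hx.injective.comp (add_left_injective k)
  adj_succ i := by
    have h := hx.adj_succ (i + k)
    rwa [add_right_comm] at h

/-- A pentagon in a graph of girth five has no chords. -/
lemma adj_iff (hx : IsPentagon G x) (hg : 5 ≤ G.egirth) (i j : Fin 5) :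
    G.Adj (x i) (x j) ↔ j = i + 1 ∨ i = j + 1 := by
  constructor
  · intro h
    have chord (k : Fin 5) : ¬ G.Adj (x k) (x (k + 1 + 1)) :=
      not_adj_of_five_le_egirth hg (hx.adj_succ k) (hx.adj_succ (k + 1))
    by_contra hne
    have : i = j ∨ j = i + 1 + 1 ∨ i = j + 1 + 1 := by
      clear h chord
      revert i j; decide
    rcases this with rfl | rfl | rfl
    · exact G.loopless.irrefl _ h
    · exact chord _ h
    · exact chord _ h.symm
  · rintro (rfl | rfl)
    · exact hx.adj_succ i
    · exact (hx.adj_succ j).symm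

/-- A vertex outside the pentagon has at most one neighbour on it. -/
lemma eq_of_adj (hx : IsPentagon G x) (hg : 5 ≤ G.egirth) {u : V} (hu : ∀ i, x i ≠ u)
    {i j : Fin 5} (hi : G.Adj (x i) u) (hj : G.Adj (x j) u) : i = j := by
  have step (k : Fin 5) (hk : G.Adj (x k) u) : ¬ G.Adj (x (k + 1)) u := fun hk' =>
    not_adj_of_five_le_egirth hg (hx.adj_succ k) hk' hk
  have step₂ (k : Fin 5) (hk : G.Adj (x k) u) : ¬ G.Adj (x (k + 1 + 1)) u := fun hk' =>
    hu (k + 1) (eq_of_five_le_egirth hg (hx.injective.ne (by clear * -; revert k; decide))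
      (hx.adj_succ k) (hx.adj_succ (k + 1)) hk hk'.symm)
  have : i = j ∨ j = i + 1 ∨ i = j + 1 ∨ j = i + 1 + 1 ∨ i = j + 1 + 1 := by
    clear * -
    revert i j; decide
  rcases this with h | rfl | rfl | rfl | rfl
  · exact h
  · exact absurd hj (step _ hi)
  · exact absurd hi (step _ hj)
  · exact absurd hj (step₂ _ hi)
  · exact absurd hi (step₂ _ hj)

lemma adj_iff_eq (hx : IsPentagon G x) (hg : 5 ≤ G.egirth) {u : V} (hu : ∀ i, x i ≠ u)
    {i : Fin 5} (hi : G.Adj (x i) u) (j : Fin 5) : G.Adj (x j) u ↔ j = i :=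
  ⟨fun hj => hx.eq_of_adj hg hu hj hi, fun h => h ▸ hi⟩

/-- A vertex `w` outside the pentagon that is adjacent to an outside neighbour `u` of the pentagon
has itself a neighbour on the pentagon: this uses that `P₆` is forbidden. -/
lemma exists_adj_of_adj [Fintype V] [DecidableEq V] (hx : IsPentagon G x) (hg : 5 ≤ G.egirth)
    (hl : eigCount G (fun t => 1 < t) ≤ 1) {u w : V} (hu : ∀ i, x i ≠ u) (hw : ∀ i, x i ≠ w)
    {i : Fin 5} (hi : G.Adj (x i) u) (huw : G.Adj u w) : ∃ j, G.Adj (x j) w := by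
  by_contra! hno
  have hx' := hx.rotate i
  generalize hy : (fun j => x (j + i)) = y at hx'
  have hyu (j : Fin 5) : y j ≠ u := hy ▸ hu _
  have hyw (j : Fin 5) : y j ≠ w := hy ▸ hw _
  have hwadj (j : Fin 5) : ¬ G.Adj (y j) w := hy ▸ hno _
  have huadj := hx'.adj_iff_eq hg hyu (i := 0) (by simpa [← hy] using hi)
  refine not_embeds_pathWithLeaf G hl 4 (Or.inr rfl)
    ![y 2, y 3, y 4, y 0, u, w] ?_ ?_
  · simp [forall_fin_six, hx'.injective.eq_iff, hyu, hyw, (hyu _).symm, (hyw _).symm, huw.ne,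
      huw.ne.symm]
  · simp [forall_fin_six, pathWithLeaf_adj, hx'.adj_iff hg, huadj, hwadj, huw, huw.symm,
      G.adj_comm u (y _),
        G.adj_comm w (y _)]

/-- A pentagon vertex has at most one outside neighbour: this uses that `D₆` is forbidden. -/
lemma eq_of_adj_of_adj [Fintype V] [DecidableEq V] (hx : IsPentagon G x) (hg : 5 ≤ G.egirth)
    (hl : eigCount G (fun t => 1 < t) ≤ 1) {u w : V} (hu : ∀ i, x i ≠ u) (hw : ∀ i, x i ≠ w)
    {i : Fin 5} (hi : G.Adj (x i) u) (hi' : G.Adj (x i) w) : u = w := by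
  by_contra hne
  have hx' := hx.rotate i
  generalize hy : (fun j => x (j + i)) = y at hx'
  have hyu (j : Fin 5) : y j ≠ u := hy ▸ hu _
  have hyw (j : Fin 5) : y j ≠ w := hy ▸ hw _
  have huadj := hx'.adj_iff_eq hg hyu (i := 0) (by simpa [← hy] using hi)
  have hwadj := hx'.adj_iff_eq hg hyw (i := 0) (by simpa [← hy] using hi')
  have huw : ¬ G.Adj u w := not_adj_of_five_le_egirth hg hi.symm hi'
  refine not_embeds_pathWithLeaf G hl 3 (Or.inl rfl)
    ![y 2, y 3, y 4, y 0, u, w] ?_ ?_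
  · simp [forall_fin_six, hx'.injective.eq_iff, hyu, hyw, (hyu _).symm, (hyw _).symm, hne,
      Ne.symm hne]
  · simp [forall_fin_six, pathWithLeaf_adj, hx'.adj_iff hg, huadj, hwadj, huw, G.adj_comm w u,
        G.adj_comm u (y _), G.adj_comm w (y _)]

/-- Outside neighbours of two pentagon vertices at distance two are adjacent: this uses that `P₆`
is forbidden. -/
lemma adj_of_adj_add_two [Fintype V] [DecidableEq V] (hx : IsPentagon G x) (hg : 5 ≤ G.egirth)
    (hl : eigCount G (fun t => 1 < t) ≤ 1) {u w : V} (hu : ∀ i, x i ≠ u) (hw : ∀ i, x i ≠ w)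
    {i : Fin 5} (hi : G.Adj (x i) u) (hi' : G.Adj (x (i + 2)) w) : G.Adj u w := by
  by_contra huw
  have hne : u ≠ w := by
    rintro rfl
    have := hx.eq_of_adj hg hu hi hi'
    simp at this
  have hx' := hx.rotate i
  generalize hy : (fun j => x (j + i)) = y at hx'
  have hyu (j : Fin 5) : y j ≠ u := hy ▸ hu _
  have hyw (j : Fin 5) : y j ≠ w := hy ▸ hw _
  have huadj := hx'.adj_iff_eq hg hyu (i := 0) (by simpa [← hy] using hi)
  have hwadj := hx'.adj_iff_eq hg hyw (i := 2) (by simpa [← hy, add_comm] using hi')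
  refine not_embeds_pathWithLeaf G hl 4 (Or.inr rfl)
    ![w, y 2, y 3, y 4, y 0, u] ?_ ?_
  · simp [forall_fin_six, hx'.injective.eq_iff, hyu, (hyu _).symm, (hyw _).symm, Ne.symm hne]
  · simp [forall_fin_six, pathWithLeaf_adj, hx'.adj_iff hg, huadj, hwadj, huw, G.adj_comm w u,
        G.adj_comm u (y _), G.adj_comm w (y _)]

/-- Every vertex outside the pentagon has a neighbour on it. -/
lemma exists_adj [Fintype V] [DecidableEq V] (hx : IsPentagon G x) (hg : 5 ≤ G.egirth)
    (hl : eigCount G (fun t => 1 < t) ≤ 1) (hconn : G.Connected) {w : V} (hw : ∀ i, x i ≠ w) :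
    ∃ j, G.Adj (x j) w := by
  by_contra hno
  obtain ⟨p⟩ := hconn (x 0) w
  -- an edge leaving the set of vertices that lie on the pentagon or next to it
  obtain ⟨d, -, hd₁, hd₂⟩ := p.exists_boundary_dart
    {v | (∃ j, x j = v) ∨ ∃ j, G.Adj (x j) v} (Or.inl ⟨0, rfl⟩)
    (by rintro (⟨j, hj⟩ | h); exacts [hw j hj, hno h])
  simp only [Set.mem_ofPred_eq, not_or, not_exists] at hd₁ hd₂
  by_cases hc : ∃ j, x j = d.fst
  · obtain ⟨j, hj⟩ := hc
    exact hd₂.2 j (hj ▸ d.adj)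
  · obtain ⟨i, hi⟩ := hd₁.resolve_left hc
    obtain ⟨j, hj⟩ := hx.exists_adj_of_adj hg hl (not_exists.1 hc) hd₂.1 hi d.adj
    exact hd₂.2 j hj

/-- The Petersen graph minus the vertex next to `x 4` has a `K_{3,3}` minor: contract `x 0 x 4`,
`x 2 u 2` and `u 1 u 3`; these are the branch sets of one side. -/
lemma hasMinor_completeBipartite (hx : IsPentagon G x) (hg : 5 ≤ G.egirth) {u : Fin 4 → V}
    (hu : ∀ j i, x i ≠ u j) (hxu : ∀ j : Fin 4, G.Adj (x j.castSucc) (u j))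
    (h02 : G.Adj (u 0) (u 2)) (h13 : G.Adj (u 1) (u 3)) (h30 : G.Adj (u 3) (u 0)) :
    HasMinor G (completeBipartiteGraph (Fin 3) (Fin 3)) := by
  have huinj (j k : Fin 4) : u j = u k ↔ j = k :=
    ⟨fun h => Fin.castSucc_injective 4 (hx.eq_of_adj hg (hu k) (h ▸ hxu j) (hxu k)), congrArg u⟩
  have hux (j : Fin 4) (i : Fin 5) : u j ≠ x i := (hu j i).symm
  have single (v : V) : (G.induce {v}).Connected := by
    rw [SimpleGraph.induce_singleton_eq_top]; exact SimpleGraph.connected_top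
  refine ⟨Sum.elim ![{x 0, x 4}, {x 2, u 2}, {u 1, u 3}] ![{x 1}, {x 3}, {u 0}],
    ?_, ?_, ?_, ?_⟩
  · rintro (j | j) <;> fin_cases j <;> simp
  · rintro (j | j) (k | k) hjk <;> fin_cases j <;> fin_cases k <;>
      simp_all [hx.injective.eq_iff]
  · have h0 := SimpleGraph.induce_pair_connected_of_adj (hx.adj_succ 4).symm
    have h2 := SimpleGraph.induce_pair_connected_of_adj (hxu 2)
    have h3 := SimpleGraph.induce_pair_connected_of_adj h13
    rintro (j | j) <;> fin_cases j
    exacts [h0, h2, h3, single _, single _, single _]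
  · have key (j k : Fin 3) :
        ∃ a ∈ (![{x 0, x 4}, {x 2, u 2}, {u 1, u 3}] : Fin 3 → Set V) j,
        ∃ b ∈ (![{x 1}, {x 3}, {u 0}] : Fin 3 → Set V) k, G.Adj a b := by
      have hu0 := hxu 0
      have hu1 := hxu 1
      have hu3 := hxu 3
      simp only [Fin.isValue, Fin.reduceCastSucc, Fin.castSucc_zero,
        Fin.castSucc_one] at hu0 hu1 hu3
      fin_cases j <;> fin_cases k <;>
        simp [hx.adj_iff hg, hu0, hu1.symm, hu3.symm, h02.symm, h30]
    rintro (j | j) (k | k) hjk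
    · simp at hjk
    · exact key j k
    · obtain ⟨a, ha, b, hb, hab⟩ := key k j
      exact ⟨b, hb, a, ha, hab.symm⟩
    · simp at hjk

end IsPentagon

/-! ### The bound on the order -/

/-- under the girth-5 setting with 5-cycle `x₀x₁x₂x₃x₄x₀`, at most 3 vertices
of `G` lie outside the cycle; in particular `G` has at most 8 vertices. -/
theorem girth_five_order_le_eight {V : Type*} [Fintype V] [DecidableEq V]
    (G : SimpleGraph V) (hconn : G.Connected) (hl : eigCount G (fun t => 1 < t) ≤ 1)
    (hplanar : WagnerPlanar G) (hgirth : G.egirth = 5)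
    (x : Fin 5 → V) (hinj : Function.Injective x) (hcyc : ∀ i, G.Adj (x i) (x (i + 1))) :
    {v : V | v ∉ Set.range x}.ncard ≤ 3 ∧ Fintype.card V ≤ 8 := by
  have hx : IsPentagon G x := ⟨hinj, hcyc⟩
  have hg : 5 ≤ G.egirth := hgirth.ge
  suffices h : {v : V | v ∉ Set.range x}.ncard ≤ 3 by
    refine ⟨h, ?_⟩
    have hsum := Set.ncard_add_ncard_compl (Set.range x)
    have hrange : (Set.range x).ncard = 5 := by
      rw [← Set.image_univ, Set.ncard_image_of_injective _ hinj]; simp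
    rw [← Nat.card_eq_fintype_card]
    have : (Set.range x)ᶜ.ncard ≤ 3 := h
    omega
  by_contra! hlt
  have hout {v : V} (hv : v ∈ {v : V | v ∉ Set.range x}) (i : Fin 5) : x i ≠ v :=
    fun h => hv ⟨i, h⟩
  have hex (v : V) : ∃ j, v ∈ {v : V | v ∉ Set.range x} → G.Adj (x j) v := by
    by_cases hv : v ∈ {v : V | v ∉ Set.range x}
    · obtain ⟨j, hj⟩ := hx.exists_adj hg hl hconn (hout hv)
      exact ⟨j, fun _ => hj⟩
    · exact ⟨0, fun h => absurd h hv⟩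
  choose c hc using hex
  have hcinj : Set.InjOn c {v : V | v ∉ Set.range x} := fun v hv w hw h =>
    hx.eq_of_adj_of_adj hg hl (hout hv) (hout hw) (hc v hv) (h ▸ hc w hw)
  -- all but at most one vertex of the cycle have an outside neighbour
  obtain ⟨k, hk⟩ : ∃ k, ∀ j, j ≠ k → j ∈ Set.image c {v : V | v ∉ Set.range x} := by
    have hsum := Set.ncard_add_ncard_compl (Set.image c {v : V | v ∉ Set.range x})
    rw [hcinj.ncard_image, Nat.card_eq_fintype_card, Fintype.card_fin] at hsum
    obtain ⟨k, hk⟩ := (Set.ncard_le_one_iff_subset_singleton (Set.toFinite _)).1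
      (show (Set.image c {v : V | v ∉ Set.range x})ᶜ.ncard ≤ 1 by omega)
    exact ⟨k, fun j hj => by_contra fun h => hj (hk h)⟩
  -- after rotating the missing index `k` to `4`, the remaining four are the `j.castSucc`
  have hk' (j : Fin 4) : ∃ v, (∀ i, x i ≠ v) ∧ G.Adj (x (j.castSucc + (k + 1))) v := by
    obtain ⟨v, hv, hvc⟩ := hk (j.castSucc + (k + 1)) (by clear * -; revert j k; decide)
    exact ⟨v, hout hv, hvc ▸ hc v hv⟩
  choose u hu hxu using hk'
  refine hplanar.2 ((hx.rotate (k + 1)).hasMinor_completeBipartite hg (u := u)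
    (fun j i => hu j _) hxu ?_ ?_ ?_)
  all_goals
    refine hx.adj_of_adj_add_two hg hl (hu _) (hu _) (hxu _) ?_
    convert hxu _ using 2
    clear * -
    revert k; decide
end
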